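/- arXiv:1804.10409 — 9 statements merged into one kernel-verified Lean document; each statement's English description precedes it below -/
import Mathlib

section
/- In every digroup (G, 1), a ⊢ 1 = 1 ⊣ a for all a ∈ G. -/
/-- A disemigroup: two associative operations `vd` (⊢) and `dv` (⊣)
satisfying the dialgebra axioms G1–G4. -/
class Disemigroup (G : Type*) where
  vd : G → G → G
  dv : G → G → G
  vd_assoc : ∀ a b c : G, vd (vd a b) c = vd a (vd b c)
  dv_assoc : ∀ a b c : G, dv (dv a b) c = dv a (dv b c)
  bar1 : ∀ a b c : G, dv a (vd b c) = dv a (dv b c)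
  bar2 : ∀ a b c : G, vd (dv a b) c = vd (vd a b) c
  bar3 : ∀ a b c : G, vd a (dv b c) = dv (vd a b) c

/-- A digroup: a disemigroup with a unit `one` and inversion `dag` (†). -/
class Digroup (G : Type*) extends Disemigroup G where
  one : G
  dag : G → G
  one_vd : ∀ a : G, vd one a = a
  dv_one : ∀ a : G, dv a one = a
  vd_dag : ∀ a : G, vd a (dag a) = one
  dag_dv : ∀ a : G, dv (dag a) a = one

open Disemigroup Digroup

/-- In every digroup, a ⊢ 1 = 1 ⊣ a. -/
theorem vd_one_eq_one_dv {G : Type*} [Digroup G] (a : G) :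
    vd a (one : G) = dv (one : G) a := by
  rw [← dag_dv a, bar3, vd_dag, dag_dv]
end

section
/- In every digroup (G, 1), a† ⊢ 1 = a† and 1 ⊣ a† = a† for all a ∈ G. -/
open Disemigroup Digroup

/-- In every digroup, a† ⊢ 1 = a† and 1 ⊣ a† = a†. -/
theorem dag_vd_one_and_one_dv_dag {G : Type*} [Digroup G] (a : G) :
    vd (dag a) (one : G) = dag a ∧ dv (one : G) (dag a) = dag a := by
  constructor
  · rw [← vd_dag a, ← vd_assoc, ← bar2, dag_dv, one_vd]
  · rw [← dag_dv a, dv_assoc, ← bar1, vd_dag, dv_one]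
end

section
/- In every digroup (G, 1), a† ⊢ b† = a† ⊣ b† for all a, b ∈ G. -/
open Disemigroup Digroup

/-- `dag a` is fixed by `⊢` with the unit on the right. -/
theorem dag_vd_one {G : Type*} [Digroup G] (a : G) : vd (dag a) one = dag a := by
  calc vd (dag a) one = vd (dag a) (vd a (dag a)) := by rw [vd_dag]
    _ = vd (dv (dag a) a) (dag a) := by rw [bar2, vd_assoc]
    _ = dag a := by rw [dag_dv, one_vd]

/-- `dag a` is fixed by `⊣` with the unit on the left. -/
theorem one_dv_dag {G : Type*} [Digroup G] (a : G) : dv one (dag a) = dag a := by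
  calc dv one (dag a) = dv (dv (dag a) a) (dag a) := by rw [dag_dv]
    _ = dv (dag a) (vd a (dag a)) := by rw [bar1, dv_assoc]
    _ = dag a := by rw [vd_dag, dv_one]

/-- In every digroup, a† ⊢ b† = a† ⊣ b†. -/
theorem dag_vd_dag_eq_dag_dv_dag {G : Type*} [Digroup G] (a b : G) :
    vd (dag a) (dag b) = dv (dag a) (dag b) := by
  calc vd (dag a) (dag b) = vd (dag a) (dv one (dag b)) := by rw [one_dv_dag]
    _ = dv (dag a) (dag b) := by rw [bar3, dag_vd_one]
end

section
/- The quotient disemigroup Disgp⟨X^{±1} ∪ {e} | S⟩ is a digroup with unit the class of [e]_1: the class of [e]_1 is a bar-unit, and for every element a of the quotient there exists a unique b with a ⊢ b = (class of [e]_1) = b ⊣ a; explicitly, for u = x_1^{ε_1}···x_n^{ε_n} with x_i ∈ X, ε_i ∈ {−1, 0, 1} (where x^0 denotes e), the inverse of the class of [u]_m is the class of [x_n^{−ε_n}···x_1^{−ε_1}e]_{n+1}. -/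
/-- The alphabet X^{±1} ∪ {e}: letters x, x⁻¹ (for x ∈ X) and the symbol e. -/
inductive Letter (X : Type*) : Type _
  | pos : X → Letter X
  | neg : X → Letter X
  | e   : Letter X

/-- The free disemigroup on Y: an element [u]_m (u a nonempty word, 1 ≤ m ≤ |u|)
is encoded as the triple (prefix before the center, center letter, suffix),
so `⟨p, c, s⟩` stands for `[p·c·s]_{|p|+1}`. -/
structure FD (Y : Type*) where
  pre : List Y
  cen : Y
  suf : List Y

namespace FD

/-- [u]_m ⊢ [v]_n = [uv]_{|u|+n}. -/
def vd {Y : Type*} (a b : FD Y) : FD Y :=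
  ⟨a.pre ++ a.cen :: (a.suf ++ b.pre), b.cen, b.suf⟩

/-- [u]_m ⊣ [v]_n = [uv]_m. -/
def dv {Y : Type*} (a b : FD Y) : FD Y :=
  ⟨a.pre, a.cen, a.suf ++ b.pre ++ b.cen :: b.suf⟩

/-- The underlying associative word of [u]_m. -/
def word {Y : Type*} (a : FD Y) : List Y := a.pre ++ a.cen :: a.suf

end FD

/-- The congruence ρ(r) on the free disemigroup generated by a set of relations r:
the smallest equivalence relation containing r compatible with ⊢ and ⊣. -/
inductive DCongr {Y : Type*} (r : FD Y → FD Y → Prop) : FD Y → FD Y → Prop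
  | of {a b : FD Y} : r a b → DCongr r a b
  | refl (a : FD Y) : DCongr r a a
  | symm {a b : FD Y} : DCongr r a b → DCongr r b a
  | trans {a b c : FD Y} : DCongr r a b → DCongr r b c → DCongr r a c
  | vd {a b c d : FD Y} : DCongr r a b → DCongr r c d → DCongr r (a.vd c) (b.vd d)
  | dv {a b c d : FD Y} : DCongr r a b → DCongr r c d → DCongr r (a.dv c) (b.dv d)

/-- The defining relations S of the free digroup:
[xx⁻¹]₂ = [e]₁, [x⁻¹x]₁ = [e]₁, [ye]₁ = [y]₁, [ey]₂ = [y]₁. -/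
def rel (X : Type*) : FD (Letter X) → FD (Letter X) → Prop := fun a b =>
  (∃ x : X, a = ⟨[Letter.pos x], Letter.neg x, []⟩ ∧ b = ⟨[], Letter.e, []⟩) ∨
  (∃ x : X, a = ⟨[], Letter.neg x, [Letter.pos x]⟩ ∧ b = ⟨[], Letter.e, []⟩) ∨
  (∃ y : Letter X, a = ⟨[], y, [Letter.e]⟩ ∧ b = ⟨[], y, []⟩) ∨
  (∃ y : Letter X, a = ⟨[Letter.e], y, []⟩ ∧ b = ⟨[], y, []⟩)

/-- The quotient disemigroup Disgp⟨X^{±1} ∪ {e} | S⟩. -/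
def DQ (X : Type*) := Quot (DCongr (rel X))

/-- The class of an element of the free disemigroup in the quotient. -/
def cls {X : Type*} (a : FD (Letter X)) : DQ X := Quot.mk _ a

/-- The operation ⊢ on the quotient. -/
def DQ.vd {X : Type*} : DQ X → DQ X → DQ X :=
  Quot.map₂ FD.vd (fun a _ _ h => DCongr.vd (DCongr.refl a) h)
    (fun _ _ b h => DCongr.vd h (DCongr.refl b))

/-- The operation ⊣ on the quotient. -/
def DQ.dv {X : Type*} : DQ X → DQ X → DQ X :=
  Quot.map₂ FD.dv (fun a _ _ h => DCongr.dv (DCongr.refl a) h)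
    (fun _ _ b h => DCongr.dv h (DCongr.refl b))

/-- The class of [e]₁, the unit of the free digroup. -/
def unitE (X : Type*) : DQ X := cls ⟨[], Letter.e, []⟩

/-- Words over X^{±1} are lists of pairs (x, b), where (x, true) is x and
(x, false) is x⁻¹, as for `FreeGroup`. This converts such a pair to a `Letter`. -/
def pm {X : Type*} (p : X × Bool) : Letter X :=
  if p.2 then Letter.pos p.1 else Letter.neg p.1

/-- A word over X^{±1} is reduced (lies in gp⟨X⟩) if it has no adjacent pair
of mutually inverse letters. -/
def Reduced {X : Type*} (L : List (X × Bool)) : Prop :=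
  List.Chain' (fun a b => ¬(a.1 = b.1 ∧ a.2 = !b.2)) L

/-- Delete all occurrences of e from a word over X^{±1} ∪ {e} (the map τ). -/
def strip {X : Type*} (L : List (Letter X)) : List (X × Bool) :=
  L.flatMap fun l => match l with
    | Letter.pos x => [(x, true)]
    | Letter.neg x => [(x, false)]
    | Letter.e => []

/-- ŵ: the reduced word of w, obtained by deleting the e's and freely reducing. -/
noncomputable def hat {X : Type*} (L : List (Letter X)) : List (X × Bool) :=
  letI := Classical.decEq X
  FreeGroup.reduce (strip L)

/-- λ(w): the (1-based) position of the first letter of w lying in X⁻¹. -/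
def lam {X : Type*} (L : List (X × Bool)) : ℕ := L.findIdx (fun p => !p.2) + 1

/-- The element [L]_m of the free disemigroup determined by a word L over X^{±1}
and a center position m. -/
def toNF {X : Type*} (L : List (X × Bool)) (m : ℕ) : FD (Letter X) :=
  ⟨(L.take (m - 1)).map pm, ((L[m-1]?).map pm).getD Letter.e, (L.drop m).map pm⟩

/-- Ω_e = {[eu]₁ : u ∈ X*}. -/
def OmegaE (X : Type*) : Set (FD (Letter X)) :=
  {a | ∃ u : List X, a = ⟨[], Letter.e, u.map Letter.pos⟩}

/-- Ω_X = {[uxv]_{|u|+1} : x ∈ X, u, v ∈ gp⟨X⟩}. -/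
def OmegaX (X : Type*) : Set (FD (Letter X)) :=
  {a | ∃ (x : X) (u v : List (X × Bool)), Reduced u ∧ Reduced v ∧
    a = ⟨u.map pm, Letter.pos x, v.map pm⟩}

/-- Ω_{X⁻¹} = {[ux⁻¹v]_{|u|+1} : x ∈ X, u ∈ X*, v ∈ (X^{±1})*, ux⁻¹v reduced}. -/
def OmegaInv (X : Type*) : Set (FD (Letter X)) :=
  {a | ∃ (x : X) (u : List X) (v : List (X × Bool)),
    Reduced ((u.map fun y => (y, true)) ++ (x, false) :: v) ∧
    a = ⟨u.map Letter.pos, Letter.neg x, v.map pm⟩}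

/-- Inversion of a single letter. -/
def linv {X : Type*} : Letter X → Letter X
  | Letter.pos x => Letter.neg x
  | Letter.neg x => Letter.pos x
  | Letter.e => Letter.e

/-- The formal inverse w⁻¹ of a word over X^{±1}. -/
def invw {X : Type*} (L : List (X × Bool)) : List (X × Bool) :=
  L.reverse.map fun p => (p.1, !p.2)

namespace DQ

variable {X : Type*}

theorem vd_assoc (a b c : DQ X) : (a.vd b).vd c = a.vd (b.vd c) := by
  rcases a with ⟨a⟩; rcases b with ⟨b⟩; rcases c with ⟨c⟩
  change cls _ = cls _
  simp [FD.vd]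

theorem dv_assoc (a b c : DQ X) : (a.dv b).dv c = a.dv (b.dv c) := by
  rcases a with ⟨a⟩; rcases b with ⟨b⟩; rcases c with ⟨c⟩
  change cls _ = cls _
  simp [FD.dv]

theorem vd_dv_assoc (a b c : DQ X) : (a.vd b).dv c = a.vd (b.dv c) := by
  rcases a with ⟨a⟩; rcases b with ⟨b⟩; rcases c with ⟨c⟩
  rfl

theorem dv_vd (a b c : DQ X) : (a.dv b).vd c = (a.vd b).vd c := by
  rcases a with ⟨a⟩; rcases b with ⟨b⟩; rcases c with ⟨c⟩
  change cls _ = cls _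
  simp [FD.vd, FD.dv]

theorem dv_vd_right (a b c : DQ X) : a.dv (b.vd c) = a.dv (b.dv c) := by
  rcases a with ⟨a⟩; rcases b with ⟨b⟩; rcases c with ⟨c⟩
  change cls _ = cls _
  simp [FD.vd, FD.dv]

/-- The class of the one-letter word `y`. -/
def gen (y : Letter X) : DQ X := cls ⟨[], y, []⟩

theorem cls_eq_of_rel {a b : FD (Letter X)} (h : rel X a b) : cls a = cls b :=
  Quot.sound (.of h)

theorem pos_vd_neg (x : X) : (gen (.pos x)).vd (gen (.neg x)) = unitE X :=
  cls_eq_of_rel (.inl ⟨x, rfl, rfl⟩)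

theorem neg_dv_pos (x : X) : (gen (.neg x)).dv (gen (.pos x)) = unitE X :=
  cls_eq_of_rel (.inr (.inl ⟨x, rfl, rfl⟩))

theorem gen_dv_unitE (y : Letter X) : (gen y).dv (unitE X) = gen y :=
  cls_eq_of_rel (.inr (.inr (.inl ⟨y, rfl, rfl⟩)))

theorem unitE_vd_gen (y : Letter X) : (unitE X).vd (gen y) = gen y :=
  cls_eq_of_rel (.inr (.inr (.inr ⟨y, rfl, rfl⟩)))

theorem cls_cons_pre (y : Letter X) (p : List (Letter X)) (c : Letter X)
    (s : List (Letter X)) : cls ⟨y :: p, c, s⟩ = (gen y).vd (cls ⟨p, c, s⟩) := rfl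

theorem cls_append_suf (p : List (Letter X)) (c : Letter X) (s : List (Letter X))
    (y : Letter X) (t : List (Letter X)) :
    cls ⟨p, c, s ++ y :: t⟩ = (cls ⟨p, c, s⟩).dv (cls ⟨[], y, t⟩) := by
  change cls _ = cls _
  simp [FD.dv]

theorem unitE_vd (a : DQ X) : (unitE X).vd a = a := by
  rcases a with ⟨⟨p, c, s⟩⟩
  change (unitE X).vd (cls _) = cls _
  cases p with
  | cons y p => rw [cls_cons_pre, ← vd_assoc, unitE_vd_gen]
  | nil =>
    cases s with
    | nil => exact unitE_vd_gen c
    | cons y s =>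
      have h := cls_append_suf [] c [] y s
      rw [List.nil_append] at h
      rw [h, ← vd_dv_assoc]
      exact congrArg (DQ.dv · _) (unitE_vd_gen c)

theorem dv_unitE (a : DQ X) : a.dv (unitE X) = a := by
  rcases a with ⟨⟨p, c, s⟩⟩
  change (cls _).dv (unitE X) = cls _
  induction p with
  | cons y p ih => rw [cls_cons_pre, vd_dv_assoc, ih]
  | nil =>
    induction s using List.reverseRecOn with
    | nil => exact gen_dv_unitE c
    | append_singleton s y _ =>
      rw [cls_append_suf, dv_assoc]
      exact congrArg (DQ.dv _) (gen_dv_unitE y)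

theorem gen_vd_gen_linv_vd (y : Letter X) (a : DQ X) :
    (gen y).vd ((gen (linv y)).vd a) = a := by
  rw [← vd_assoc]
  cases y with
  | pos x => exact (congrArg (DQ.vd · a) (pos_vd_neg x)).trans (unitE_vd a)
  | neg x =>
    rw [← dv_vd]
    exact (congrArg (DQ.vd · a) (neg_dv_pos x)).trans (unitE_vd a)
  | e => exact (vd_assoc _ _ _).trans ((unitE_vd _).trans (unitE_vd a))

theorem neg_vd_unitE (x : X) : (gen (.neg x)).vd (unitE X) = gen (.neg x) := by
  rw [← pos_vd_neg x]
  exact gen_vd_gen_linv_vd (.neg x) _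

theorem unitE_dv_neg (x : X) : (unitE X).dv (gen (.neg x)) = gen (.neg x) := by
  rw [← neg_dv_pos x, dv_assoc, ← dv_vd_right, pos_vd_neg, dv_unitE]

theorem linv_vd_unitE_dv (y : Letter X) :
    ((gen (linv y)).vd (unitE X)).dv (gen y) = unitE X := by
  cases y with
  | pos x => exact (congrArg (DQ.dv · _) (neg_vd_unitE x)).trans (neg_dv_pos x)
  | neg x =>
    rw [vd_dv_assoc, unitE_dv_neg]
    exact pos_vd_neg x
  | e => exact (dv_unitE _).trans (unitE_vd _)

theorem cls_append_reverse_linv (w q : List (Letter X)) (c : Letter X)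
    (s : List (Letter X)) :
    cls ⟨w ++ (w.reverse.map linv ++ q), c, s⟩ = cls ⟨q, c, s⟩ := by
  induction w generalizing q with
  | nil => rfl
  | cons y w ih =>
    simp only [List.reverse_cons, List.map_append, List.map_cons, List.map_nil,
      List.append_assoc, List.cons_append, List.nil_append]
    rw [cls_cons_pre, ih, cls_cons_pre, gen_vd_gen_linv_vd]

theorem cls_sandwich {p p' s s' : List (Letter X)} {c c' : Letter X}
    (h : cls ⟨p, c, s⟩ = cls ⟨p', c', s'⟩) (q t : List (Letter X)) :
    cls ⟨q ++ p, c, s ++ t⟩ = cls ⟨q ++ p', c', s' ++ t⟩ := by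
  induction q with
  | cons y q ih => rw [List.cons_append, cls_cons_pre, ih]; rfl
  | nil =>
    cases t with
    | nil => simpa using h
    | cons y t => rw [cls_append_suf, cls_append_suf, List.nil_append, h, List.nil_append]

theorem cls_reverse_linv_e (w : List (Letter X)) :
    cls ⟨w.reverse.map linv, .e, w⟩ = unitE X := by
  induction w with
  | nil => rfl
  | cons y w ih =>
    have h : cls ⟨[linv y], .e, [y]⟩ = cls ⟨[], .e, []⟩ := linv_vd_unitE_dv y
    have h' := cls_sandwich h (w.reverse.map linv) w
    rw [List.append_nil, List.nil_append] at h'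
    simpa using h'.trans ih

theorem vd_inverse (a : FD (Letter X)) :
    (cls a).vd (cls ⟨a.word.reverse.map linv, .e, []⟩) = unitE X := by
  have h := cls_append_reverse_linv a.word [] .e []
  refine Eq.trans ?_ h
  change cls _ = cls _
  simp [FD.vd, FD.word]

theorem inverse_dv (a : FD (Letter X)) :
    (cls ⟨a.word.reverse.map linv, .e, []⟩ : DQ X).dv (cls a) = unitE X :=
  cls_reverse_linv_e a.word

theorem eq_vd_unitE_of_inverse {a b c : DQ X} (hb : a.vd b = unitE X)
    (hc : c.dv a = unitE X) : b = c.vd (unitE X) := by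
  rw [← hb, ← vd_assoc, ← dv_vd, hc, unitE_vd]

end DQ

/-- Disgp⟨X^{±1} ∪ {e} | S⟩ is a digroup with unit the class of [e]₁:
the class of [e]₁ is a bar-unit, every element has a unique two-sided
inverse, and the inverse of the class of [u]_m, where u = x₁^{ε₁}···x_n^{ε_n},
is the class of [x_n^{−ε_n}···x₁^{−ε₁}e]_{n+1}. -/
theorem DQ_is_digroup (X : Type*) :
    (∀ a : DQ X, DQ.vd (unitE X) a = a ∧ DQ.dv a (unitE X) = a) ∧
    (∀ a : DQ X, ∃! b : DQ X, DQ.vd a b = unitE X ∧ DQ.dv b a = unitE X) ∧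
    (∀ a : FD (Letter X),
      DQ.vd (cls a) (cls ⟨a.word.reverse.map linv, Letter.e, []⟩) = unitE X ∧
      DQ.dv (cls ⟨a.word.reverse.map linv, Letter.e, []⟩) (cls a) = unitE X) := by
  refine ⟨fun a => ⟨DQ.unitE_vd a, DQ.dv_unitE a⟩, ?_,
    fun a => ⟨DQ.vd_inverse a, DQ.inverse_dv a⟩⟩
  rintro ⟨a⟩
  refine ⟨_, ⟨DQ.vd_inverse a, DQ.inverse_dv a⟩, ?_⟩
  rintro b ⟨hb, hb'⟩
  rw [DQ.eq_vd_unitE_of_inverse hb hb']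
  exact (DQ.eq_vd_unitE_of_inverse (DQ.vd_inverse a) hb').symm
end

section
/- The digroup (Disgp⟨X^{±1} ∪ {e} | S⟩, class of [e]_1) is a free digroup on X: for every digroup (G, 1_G) and every function φ : X → G, there exists a unique digroup homomorphism φ* from Disgp⟨X^{±1} ∪ {e} | S⟩ to G with φ*(class of [x]_1) = φ(x) for all x ∈ X. -/
namespace FD

open Disemigroup

variable {Y G : Type*} [Disemigroup G]

/-- The homomorphic extension to the free disemigroup of a map on generators. -/
def lift (ψ : Y → G) (a : FD Y) : G :=
  a.pre.foldr (fun y g => Disemigroup.vd (ψ y) g)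
    (a.suf.foldl (fun g y => Disemigroup.dv g (ψ y)) (ψ a.cen))

theorem foldr_vd (ψ : Y → G) (p : List Y) (g h : G) :
    Disemigroup.vd (p.foldr (fun y g => Disemigroup.vd (ψ y) g) g) h =
      p.foldr (fun y g => Disemigroup.vd (ψ y) g) (Disemigroup.vd g h) := by
  induction p with
  | nil => rfl
  | cons y p ih => simp only [List.foldr_cons, vd_assoc, ih]

theorem foldl_vd (ψ : Y → G) (s : List Y) (g h : G) :
    Disemigroup.vd (s.foldl (fun g y => Disemigroup.dv g (ψ y)) g) h =
      Disemigroup.vd g (s.foldr (fun y g => Disemigroup.vd (ψ y) g) h) := by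
  induction s generalizing g with
  | nil => rfl
  | cons y s ih => simp only [List.foldr_cons, List.foldl_cons, ih, bar2, vd_assoc]

theorem foldr_dv (ψ : Y → G) (p : List Y) (g h : G) :
    Disemigroup.dv (p.foldr (fun y g => Disemigroup.vd (ψ y) g) g) h =
      p.foldr (fun y g => Disemigroup.vd (ψ y) g) (Disemigroup.dv g h) := by
  induction p with
  | nil => rfl
  | cons y p ih => simp only [List.foldr_cons, ← bar3, ih]

theorem dv_foldr (ψ : Y → G) (p : List Y) (g h : G) :
    Disemigroup.dv g (p.foldr (fun y g => Disemigroup.vd (ψ y) g) h) =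
      Disemigroup.dv (p.foldl (fun g y => Disemigroup.dv g (ψ y)) g) h := by
  induction p generalizing g with
  | nil => rfl
  | cons y p ih => simp only [List.foldr_cons, List.foldl_cons, ← ih, bar1, dv_assoc]

theorem dv_foldl (ψ : Y → G) (s : List Y) (g h : G) :
    Disemigroup.dv g (s.foldl (fun g y => Disemigroup.dv g (ψ y)) h) =
      s.foldl (fun g y => Disemigroup.dv g (ψ y)) (Disemigroup.dv g h) := by
  induction s generalizing h with
  | nil => rfl
  | cons y s ih => simp only [List.foldl_cons, ih, dv_assoc]

theorem lift_vd (ψ : Y → G) (a b : FD Y) :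
    lift ψ (a.vd b) = Disemigroup.vd (lift ψ a) (lift ψ b) := by
  simp only [lift, FD.vd, foldr_vd, foldl_vd, List.foldr_append, List.foldr_cons]

theorem lift_dv (ψ : Y → G) (a b : FD Y) :
    lift ψ (a.dv b) = Disemigroup.dv (lift ψ a) (lift ψ b) := by
  simp only [lift, FD.dv, List.foldl_append, List.foldl_cons]
  rw [foldr_dv, dv_foldr, dv_foldl]

/-- A homomorphism from the free disemigroup is determined by its values on generators. -/
theorem eq_lift (ψ : Y → G) (f : FD Y → G)
    (hvd : ∀ a b, f (a.vd b) = Disemigroup.vd (f a) (f b))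
    (hdv : ∀ a b, f (a.dv b) = Disemigroup.dv (f a) (f b))
    (hψ : ∀ y, f ⟨[], y, []⟩ = ψ y) (a : FD Y) : f a = lift ψ a := by
  obtain ⟨p, c, s⟩ := a
  induction p with
  | nil =>
    induction s using List.reverseRecOn with
    | nil => exact hψ c
    | append_singleton s y ih =>
      have hsplit : (⟨[], c, s ++ [y]⟩ : FD Y) = FD.dv ⟨[], c, s⟩ ⟨[], y, []⟩ := by
        simp [FD.dv]
      rw [hsplit, hdv, lift_dv, ih, hψ]
      rfl
  | cons y p ih =>
    change f (FD.vd ⟨[], y, []⟩ ⟨p, c, s⟩) = lift ψ (FD.vd ⟨[], y, []⟩ ⟨p, c, s⟩)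
    rw [hvd, lift_vd, ih, hψ]
    rfl

/-- A homomorphic extension identifying the pairs of `r` identifies the pairs of the congruence
generated by `r`. -/
theorem lift_eq_of_dCongr (ψ : Y → G) {r : FD Y → FD Y → Prop}
    (hr : ∀ a b, r a b → lift ψ a = lift ψ b) {a b : FD Y} (h : DCongr r a b) :
    lift ψ a = lift ψ b := by
  induction h with
  | of h => exact hr _ _ h
  | refl => rfl
  | symm _ ih => exact ih.symm
  | trans _ _ ih₁ ih₂ => exact ih₁.trans ih₂
  | vd _ _ ih₁ ih₂ => rw [lift_vd, lift_vd, ih₁, ih₂]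
  | dv _ _ ih₁ ih₂ => rw [lift_dv, lift_dv, ih₁, ih₂]

end FD

namespace Digroup

variable {G : Type*} [Digroup G]

theorem eq_one_dv_dag {a b : G} (h : Disemigroup.dv b a = one) :
    b = Disemigroup.dv one (dag a) := by
  rw [← h, Disemigroup.dv_assoc, ← Disemigroup.bar1, vd_dag, dv_one]

/-- The inverse is determined by its left law for `⊣`. -/
theorem eq_dag {a b : G} (h : Disemigroup.dv b a = one) : b = dag a :=
  (eq_one_dv_dag h).trans (eq_one_dv_dag (dag_dv a)).symm

/-- The extension to `X^{±1} ∪ {e}` of a map from `X` to a digroup. -/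
def letterMap {X : Type*} (φ : X → G) : Letter X → G
  | Letter.pos x => φ x
  | Letter.neg x => dag (φ x)
  | Letter.e => one

theorem lift_letterMap_eq_of_rel {X : Type*} (φ : X → G) (a b : FD (Letter X))
    (h : rel X a b) : FD.lift (letterMap φ) a = FD.lift (letterMap φ) b := by
  rcases h with ⟨x, rfl, rfl⟩ | ⟨x, rfl, rfl⟩ | ⟨y, rfl, rfl⟩ | ⟨y, rfl, rfl⟩
  · exact vd_dag _
  · exact dag_dv _
  · exact dv_one _
  · exact one_vd _

end Digroup

/-- (Disgp⟨X^{±1} ∪ {e} | S⟩, class of [e]₁) is a free digroup on X: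
every map φ : X → G into a digroup extends uniquely to a digroup
homomorphism sending the class of [x]₁ to φ(x). -/
theorem DQ_is_free_digroup (X : Type*) (G : Type*) [Digroup G] (φ : X → G) :
    ∃! f : DQ X → G,
      ((∀ a b : DQ X, f (DQ.vd a b) = Disemigroup.vd (f a) (f b)) ∧
       (∀ a b : DQ X, f (DQ.dv a b) = Disemigroup.dv (f a) (f b)) ∧
       f (unitE X) = Digroup.one) ∧
      ∀ x : X, f (cls ⟨[], Letter.pos x, []⟩) = φ x := by
  refine ⟨Quot.lift (FD.lift (Digroup.letterMap φ)) fun _ _ h =>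
    FD.lift_eq_of_dCongr _ (Digroup.lift_letterMap_eq_of_rel φ) h, ⟨⟨?_, ?_, rfl⟩, fun _ => rfl⟩, ?_⟩
  · rintro ⟨a⟩ ⟨b⟩
    exact FD.lift_vd _ a b
  · rintro ⟨a⟩ ⟨b⟩
    exact FD.lift_dv _ a b
  · rintro f ⟨⟨hvd, hdv, hone⟩, hφ⟩
    funext q
    obtain ⟨a⟩ := q
    refine FD.eq_lift _ (fun a => f (cls a)) (fun a b => hvd (cls a) (cls b))
      (fun a b => hdv (cls a) (cls b)) ?_ a
    rintro (x | x | _)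
    · exact hφ x
    · refine Digroup.eq_dag ?_
      rw [← hφ x, ← hdv, ← hone]
      exact congrArg f (Quot.sound (DCongr.of (Or.inr (Or.inl ⟨x, rfl, rfl⟩))))
    · exact hone
end

section
/- In the quotient disemigroup Disgp⟨X^{±1} ∪ {e} | S⟩, the following identifications hold for all m ≥ 0, n ≥ 0 and all x, z, x_{i_1}, …, x_{i_n}, x_{l_1}, …, x_{l_m} ∈ X: (1) the class of [x⁻¹e]_2 equals the class of [x⁻¹]_1; (2) the class of [e x_{i_1}···x_{i_n} x⁻¹]_1 equals the class of [x_{i_1}···x_{i_n} x⁻¹]_{n+1}; (3) the class of [xe]_2 equals the class of [ex]_1; (4) the class of [x⁻¹ x_{l_1}···x_{l_m} z⁻¹]_{m+2} equals the class of [x⁻¹ x_{l_1}···x_{l_m} z⁻¹]_1. Consequently ρ(S) = ρ(S ∪ T), where T is the set of these relations. -/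
/-- The extra relations T: t₁ = ([x⁻¹e]₂, [x⁻¹]₁),
t₂ = ([e x_{i₁}···x_{i_n} x⁻¹]₁, [x_{i₁}···x_{i_n} x⁻¹]_{n+1}),
t₃ = ([xe]₂, [ex]₁),
t₄ = ([x⁻¹ x_{l₁}···x_{l_m} z⁻¹]_{m+2}, [x⁻¹ x_{l₁}···x_{l_m} z⁻¹]₁). -/
def relT (X : Type*) : FD (Letter X) → FD (Letter X) → Prop := fun a b =>
  (∃ x : X, a = ⟨[Letter.neg x], Letter.e, []⟩ ∧ b = ⟨[], Letter.neg x, []⟩) ∨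
  (∃ (x : X) (l : List X),
    a = ⟨[], Letter.e, l.map Letter.pos ++ [Letter.neg x]⟩ ∧
    b = ⟨l.map Letter.pos, Letter.neg x, []⟩) ∨
  (∃ x : X, a = ⟨[Letter.pos x], Letter.e, []⟩ ∧ b = ⟨[], Letter.e, [Letter.pos x]⟩) ∨
  (∃ (x z : X) (l : List X),
    a = ⟨Letter.neg x :: l.map Letter.pos, Letter.neg z, []⟩ ∧
    b = ⟨[], Letter.neg x, l.map Letter.pos ++ [Letter.neg z]⟩)

section

open Letter

variable {X : Type*}

lemma DCongr.pos_vd_neg (x : X) :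
    DCongr (rel X) ⟨[pos x], neg x, []⟩ ⟨[], e, []⟩ :=
  .of (Or.inl ⟨x, rfl, rfl⟩)

lemma DCongr.neg_dv_pos (x : X) :
    DCongr (rel X) ⟨[], neg x, [pos x]⟩ ⟨[], e, []⟩ :=
  .of (Or.inr (.inl ⟨x, rfl, rfl⟩))

lemma DCongr.dv_e (y : Letter X) : DCongr (rel X) ⟨[], y, [e]⟩ ⟨[], y, []⟩ :=
  .of (Or.inr (.inr (.inl ⟨y, rfl, rfl⟩)))

lemma DCongr.e_vd (y : Letter X) : DCongr (rel X) ⟨[e], y, []⟩ ⟨[], y, []⟩ :=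
  .of (Or.inr (.inr (.inr ⟨y, rfl, rfl⟩)))

lemma DCongr.neg_vd_e (x : X) :
    DCongr (rel X) ⟨[neg x], e, []⟩ ⟨[], neg x, []⟩ := by
  have expand : DCongr (rel X) ⟨[neg x], e, []⟩ ⟨[neg x, pos x], neg x, []⟩ :=
    .vd (.refl ⟨[], neg x, []⟩) (pos_vd_neg x).symm
  have contract : DCongr (rel X) ⟨[neg x, pos x], neg x, []⟩ ⟨[e], neg x, []⟩ :=
    .vd (neg_dv_pos x) (.refl ⟨[], neg x, []⟩)
  exact expand.trans (contract.trans (e_vd (neg x)))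

lemma DCongr.pos_vd_e (x : X) :
    DCongr (rel X) ⟨[pos x], e, []⟩ ⟨[], e, [pos x]⟩ := by
  have expand : DCongr (rel X) ⟨[pos x], e, []⟩ ⟨[pos x], neg x, [pos x]⟩ :=
    .vd (.refl ⟨[], pos x, []⟩) (neg_dv_pos x).symm
  have contract : DCongr (rel X) ⟨[pos x], neg x, [pos x]⟩ ⟨[], e, [pos x]⟩ :=
    .dv (pos_vd_neg x) (.refl ⟨[], pos x, []⟩)
  exact expand.trans contract

lemma DCongr.e_dv_neg (x : X) :
    DCongr (rel X) ⟨[], e, [neg x]⟩ ⟨[], neg x, []⟩ := by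
  have expand : DCongr (rel X) ⟨[], e, [neg x]⟩ ⟨[], neg x, [pos x, neg x]⟩ :=
    .dv (neg_dv_pos x).symm (.refl ⟨[], neg x, []⟩)
  have contract : DCongr (rel X) ⟨[], neg x, [pos x, neg x]⟩ ⟨[], neg x, [e]⟩ :=
    .dv (.refl ⟨[], neg x, []⟩) (pos_vd_neg x)
  exact expand.trans (contract.trans (dv_e (neg x)))

lemma DCongr.e_dv_pos_neg (x : X) (l : List X) :
    DCongr (rel X) ⟨[], e, l.map pos ++ [neg x]⟩ ⟨l.map pos, neg x, []⟩ := by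
  induction l with
  | nil => exact e_dv_neg x
  | cons y l ih =>
    have shift : DCongr (rel X) ⟨[pos y], e, l.map pos ++ [neg x]⟩
        ⟨[], e, pos y :: (l.map pos ++ [neg x])⟩ :=
      .dv (pos_vd_e y) (.refl ⟨l.map pos, neg x, []⟩)
    exact shift.symm.trans (.vd (.refl ⟨[], pos y, []⟩) ih)

lemma DCongr.neg_pos_neg (x z : X) (l : List X) :
    DCongr (rel X) ⟨neg x :: l.map pos, neg z, []⟩
      ⟨[], neg x, l.map pos ++ [neg z]⟩ := by
  have expand : DCongr (rel X) ⟨neg x :: l.map pos, neg z, []⟩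
      ⟨[neg x], e, l.map pos ++ [neg z]⟩ :=
    .vd (.refl ⟨[], neg x, []⟩) (e_dv_pos_neg z l).symm
  exact expand.trans (.dv (neg_vd_e x) (.refl ⟨l.map pos, neg z, []⟩))

lemma DCongr.of_relT {a b : FD (Letter X)} (h : relT X a b) : DCongr (rel X) a b := by
  rcases h with ⟨x, rfl, rfl⟩ | ⟨x, l, rfl, rfl⟩ | ⟨x, rfl, rfl⟩ | ⟨x, z, l, rfl, rfl⟩
  · exact neg_vd_e x
  · exact e_dv_pos_neg x l
  · exact pos_vd_e x
  · exact neg_pos_neg x z l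

/-- A congruence containing the generators of `ρ(r)` contains `ρ(r)`. -/
lemma DCongr.of_le {Y : Type*} {r s : FD Y → FD Y → Prop}
    (hrs : ∀ a b, r a b → DCongr s a b) {a b : FD Y} (h : DCongr r a b) :
    DCongr s a b := by
  induction h with
  | of h => exact hrs _ _ h
  | refl a => exact .refl a
  | symm _ ih => exact ih.symm
  | trans _ _ ih₁ ih₂ => exact ih₁.trans ih₂
  | vd _ _ ih₁ ih₂ => exact .vd ih₁ ih₂
  | dv _ _ ih₁ ih₂ => exact .dv ih₁ ih₂

end

/-- In Disgp⟨X^{±1} ∪ {e} | S⟩ the four families of identifications T hold,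
and consequently ρ(S) = ρ(S ∪ T). -/
theorem relT_holds_and_congr_eq (X : Type*) :
    (∀ x : X, cls ⟨[Letter.neg x], Letter.e, []⟩ = cls ⟨[], Letter.neg x, []⟩) ∧
    (∀ (x : X) (l : List X),
      cls ⟨[], Letter.e, l.map Letter.pos ++ [Letter.neg x]⟩ =
        cls ⟨l.map Letter.pos, Letter.neg x, []⟩) ∧
    (∀ x : X, cls ⟨[Letter.pos x], Letter.e, []⟩ = cls ⟨[], Letter.e, [Letter.pos x]⟩) ∧
    (∀ (x z : X) (l : List X),
      cls ⟨Letter.neg x :: l.map Letter.pos, Letter.neg z, []⟩ =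
        cls ⟨[], Letter.neg x, l.map Letter.pos ++ [Letter.neg z]⟩) ∧
    (∀ a b : FD (Letter X),
      DCongr (rel X) a b ↔ DCongr (fun a b => rel X a b ∨ relT X a b) a b) := by
  exact ⟨fun x => Quot.sound (.neg_vd_e x), fun x l => Quot.sound (.e_dv_pos_neg x l),
    fun x => Quot.sound (.pos_vd_e x), fun x z l => Quot.sound (.neg_pos_neg x z l),
    fun _ _ => ⟨DCongr.of_le fun _ _ h => .of (.inl h),
      DCongr.of_le fun _ _ h => h.elim .of DCongr.of_relT⟩⟩
end

section
/- The quotient map from the free disemigroup [(X^{±1} ∪ {e})⁺]_ω onto Disgp⟨X^{±1} ∪ {e} | S⟩ restricts to a bijection from Ω_e ∪ Ω_X ∪ Ω_{X⁻¹} onto Disgp⟨X^{±1} ∪ {e} | S⟩; that is, every element of the quotient is the class of exactly one element of Ω_e ∪ Ω_X ∪ Ω_{X⁻¹}. -/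
namespace DCongr

variable {Y : Type*} {r : FD Y → FD Y → Prop} {p p' s s' : List Y} {c c' : Y}

/-- Congruent elements stay congruent when both are extended on the left by a word. -/
theorem append_pre (A : List Y) (h : DCongr r ⟨p, c, s⟩ ⟨p', c', s'⟩) :
    DCongr r ⟨A ++ p, c, s⟩ ⟨A ++ p', c', s'⟩ := by
  cases A with
  | nil => exact h
  | cons a A => exact DCongr.vd (DCongr.refl ⟨[], a, A⟩) h

/-- Congruent elements stay congruent when both are extended on the right by a word. -/
theorem append_suf (B : List Y) (h : DCongr r ⟨p, c, s⟩ ⟨p', c', s'⟩) :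
    DCongr r ⟨p, c, s ++ B⟩ ⟨p', c', s' ++ B⟩ := by
  cases B with
  | nil => simpa using h
  | cons b B => simpa [FD.dv] using DCongr.dv h (DCongr.refl ⟨[], b, B⟩)

end DCongr

/-- Two words are side-equivalent if they may be exchanged, up to the congruence generated by `r`,
whenever they form the whole prefix or the whole suffix of an element. -/
def SideEquiv {Y : Type*} (r : FD Y → FD Y → Prop) (w w' : List Y) : Prop :=
  (∀ c s, DCongr r ⟨w, c, s⟩ ⟨w', c, s⟩) ∧ ∀ p c, DCongr r ⟨p, c, w⟩ ⟨p, c, w'⟩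

namespace SideEquiv

variable {Y : Type*} {r : FD Y → FD Y → Prop} {w w' w'' : List Y}

theorem refl (w : List Y) : SideEquiv r w w :=
  ⟨fun _ _ => DCongr.refl _, fun _ _ => DCongr.refl _⟩

theorem symm (h : SideEquiv r w w') : SideEquiv r w' w :=
  ⟨fun c s => (h.1 c s).symm, fun p c => (h.2 p c).symm⟩

theorem trans (h : SideEquiv r w w') (h' : SideEquiv r w' w'') : SideEquiv r w w'' :=
  ⟨fun c s => (h.1 c s).trans (h'.1 c s), fun p c => (h.2 p c).trans (h'.2 p c)⟩

theorem cons (y : Y) (h : SideEquiv r w w') : SideEquiv r (y :: w) (y :: w') :=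
  ⟨fun c s => (h.1 c s).append_pre [y],
    fun p c => DCongr.dv (DCongr.refl ⟨p, c, []⟩) (h.2 [] y)⟩

/-- A word that can be deleted next to any single center letter can be deleted anywhere away from
the center. -/
theorem delete (hpre : ∀ c, DCongr r ⟨w, c, []⟩ ⟨[], c, []⟩)
    (hsuf : ∀ c, DCongr r ⟨[], c, w⟩ ⟨[], c, []⟩) (A B : List Y) :
    SideEquiv r (A ++ (w ++ B)) (A ++ B) := by
  induction A with
  | cons a A ih => exact ih.cons a
  | nil =>
    refine ⟨fun c s => ?_, fun p c => ?_⟩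
    · cases B with
      | nil => simpa using (hpre c).append_suf s
      | cons b B => exact DCongr.vd (hpre b) (DCongr.refl ⟨B, c, s⟩)
    · simpa using ((hsuf c).append_pre p).append_suf B

end SideEquiv

section Presentation

variable {X : Type*}

theorem dcongr_pos_neg (x : X) :
    DCongr (rel X) ⟨[Letter.pos x], Letter.neg x, []⟩ ⟨[], Letter.e, []⟩ :=
  DCongr.of (Or.inl ⟨x, rfl, rfl⟩)

theorem dcongr_neg_pos (x : X) :
    DCongr (rel X) ⟨[], Letter.neg x, [Letter.pos x]⟩ ⟨[], Letter.e, []⟩ :=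
  DCongr.of (Or.inr (Or.inl ⟨x, rfl, rfl⟩))

theorem dcongr_e_suf (y : Letter X) : DCongr (rel X) ⟨[], y, [Letter.e]⟩ ⟨[], y, []⟩ :=
  DCongr.of (Or.inr (Or.inr (Or.inl ⟨y, rfl, rfl⟩)))

theorem dcongr_e_pre (y : Letter X) : DCongr (rel X) ⟨[Letter.e], y, []⟩ ⟨[], y, []⟩ :=
  DCongr.of (Or.inr (Or.inr (Or.inr ⟨y, rfl, rfl⟩)))

theorem sideEquiv_e (A B : List (Letter X)) :
    SideEquiv (rel X) (A ++ Letter.e :: B) (A ++ B) :=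
  SideEquiv.delete dcongr_e_pre dcongr_e_suf A B

theorem sideEquiv_pos_neg (x : X) (A B : List (Letter X)) :
    SideEquiv (rel X) (A ++ Letter.pos x :: Letter.neg x :: B) (A ++ B) :=
  SideEquiv.delete (w := [Letter.pos x, Letter.neg x])
    (fun c => (DCongr.vd (dcongr_pos_neg x) (DCongr.refl ⟨[], c, []⟩)).trans (dcongr_e_pre c))
    (fun c => (DCongr.dv (DCongr.refl ⟨[], c, []⟩) (dcongr_pos_neg x)).trans (dcongr_e_suf c)) A B

theorem sideEquiv_neg_pos (x : X) (A B : List (Letter X)) :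
    SideEquiv (rel X) (A ++ Letter.neg x :: Letter.pos x :: B) (A ++ B) :=
  SideEquiv.delete (w := [Letter.neg x, Letter.pos x])
    (fun c => (DCongr.vd (dcongr_neg_pos x) (DCongr.refl ⟨[], c, []⟩)).trans (dcongr_e_pre c))
    (fun c => (DCongr.dv (DCongr.refl ⟨[], c, []⟩) (dcongr_neg_pos x)).trans (dcongr_e_suf c)) A B

@[simp] theorem strip_nil : strip ([] : List (Letter X)) = [] := rfl

@[simp] theorem strip_cons_pos (x : X) (L : List (Letter X)) :
    strip (Letter.pos x :: L) = (x, true) :: strip L := rfl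

@[simp] theorem strip_cons_neg (x : X) (L : List (Letter X)) :
    strip (Letter.neg x :: L) = (x, false) :: strip L := rfl

@[simp] theorem strip_cons_e (L : List (Letter X)) : strip (Letter.e :: L) = strip L := rfl

@[simp] theorem strip_append (L M : List (Letter X)) : strip (L ++ M) = strip L ++ strip M := by
  simp [strip]

@[simp] theorem strip_map_pm (L : List (X × Bool)) : strip (L.map pm) = L := by
  induction L with
  | nil => rfl
  | cons a L ih => obtain ⟨x, _ | _⟩ := a <;> simpa [pm] using ih

@[simp] theorem strip_map_pos (u : List X) :
    strip (u.map Letter.pos) = u.map fun y => (y, true) := by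
  induction u with
  | nil => rfl
  | cons a L ih => simpa using ih

theorem sideEquiv_map_pm_strip (L : List (Letter X)) :
    SideEquiv (rel X) L ((strip L).map pm) := by
  induction L with
  | nil => exact SideEquiv.refl _
  | cons a L ih =>
    cases a with
    | pos x => exact ih.cons _
    | neg x => exact ih.cons _
    | e => exact (sideEquiv_e [] L).trans ih

/-- The element of the free group represented by a word over X^{±1} ∪ {e}. -/
def groupVal (L : List (Letter X)) : FreeGroup X := FreeGroup.mk (strip L)

@[simp] theorem groupVal_append (L M : List (Letter X)) :
    groupVal (L ++ M) = groupVal L * groupVal M := by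
  simp [groupVal]

/-- The element of the free group represented by a letter. -/
def letterVal : Letter X → FreeGroup X
  | Letter.pos x => FreeGroup.of x
  | Letter.neg x => (FreeGroup.of x)⁻¹
  | Letter.e => 1

@[simp] theorem groupVal_nil : groupVal ([] : List (Letter X)) = 1 := rfl

@[simp] theorem groupVal_cons (a : Letter X) (L : List (Letter X)) :
    groupVal (a :: L) = letterVal a * groupVal L := by
  have h : groupVal [a] = letterVal a := by cases a <;> rfl
  rw [← h, ← groupVal_append, List.singleton_append]

theorem sideEquiv_of_groupVal_eq {L M : List (Letter X)} (h : groupVal L = groupVal M) :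
    SideEquiv (rel X) L M := by
  refine (sideEquiv_map_pm_strip L).trans (SideEquiv.trans ?_ (sideEquiv_map_pm_strip M).symm)
  have hgen := Quot.eqvGen_exact h
  generalize strip L = L' at hgen ⊢
  generalize strip M = M' at hgen ⊢
  induction hgen with
  | rel _ _ hstep =>
    obtain @⟨A, B, x, b⟩ := hstep
    cases b
    · simpa [pm] using sideEquiv_neg_pos x (A.map pm) (B.map pm)
    · simpa [pm] using sideEquiv_pos_neg x (A.map pm) (B.map pm)
  | refl => exact SideEquiv.refl _
  | symm _ _ _ ih => exact ih.symm
  | trans _ _ _ _ _ ih ih' => exact ih.trans ih'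

theorem dcongr_neg_pre (p s : List (Letter X)) (x : X) :
    DCongr (rel X) ⟨p, Letter.neg x, s⟩ ⟨p ++ [Letter.neg x], Letter.e, s⟩ := by
  have h := ((dcongr_pos_neg x).append_pre (p ++ [Letter.neg x])).append_suf s
  have h' := (sideEquiv_neg_pos x p []).1 (Letter.neg x) s
  simp only [List.append_assoc, List.cons_append, List.nil_append, List.append_nil] at h h'
  exact h'.symm.trans h

theorem dcongr_neg_suf (p s : List (Letter X)) (x : X) :
    DCongr (rel X) ⟨p, Letter.neg x, s⟩ ⟨p, Letter.e, Letter.neg x :: s⟩ := by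
  have h := ((dcongr_neg_pos x).append_pre p).append_suf (Letter.neg x :: s)
  have h' := (sideEquiv_pos_neg x [] s).2 p (Letter.neg x)
  simp only [List.cons_append, List.nil_append, List.append_nil] at h h'
  exact h'.symm.trans h

/-- A letter may be moved across the center e. -/
theorem dcongr_e_shift (p s : List (Letter X)) (a : Letter X) :
    DCongr (rel X) ⟨p ++ [a], Letter.e, s⟩ ⟨p, Letter.e, a :: s⟩ := by
  cases a with
  | e =>
    refine DCongr.trans ?_ ((sideEquiv_e [] s).2 p _).symm
    simpa using (sideEquiv_e p []).1 Letter.e s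
  | neg x => exact (dcongr_neg_pre p s x).symm.trans (dcongr_neg_suf p s x)
  | pos x =>
    have h₁ := (sideEquiv_neg_pos x [] s).2 (p ++ [Letter.pos x]) Letter.e
    have h₂ := (dcongr_neg_pre (p ++ [Letter.pos x]) (Letter.pos x :: s) x).symm.trans
      (dcongr_neg_suf (p ++ [Letter.pos x]) (Letter.pos x :: s) x)
    have h₃ := (sideEquiv_pos_neg x p []).1 Letter.e (Letter.pos x :: s)
    simp only [List.append_assoc, List.cons_append, List.nil_append, List.append_nil] at h₁ h₂ h₃ ⊢
    exact h₁.symm.trans (h₂.symm.trans h₃)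

theorem dcongr_e_center (p s : List (Letter X)) :
    DCongr (rel X) ⟨p, Letter.e, s⟩ ⟨[], Letter.e, p ++ s⟩ := by
  induction p using List.reverseRecOn generalizing s with
  | nil => exact DCongr.refl _
  | append_singleton p a ih => simpa using (dcongr_e_shift p s a).trans (ih (a :: s))

/-- The data attached to an element with center x ∈ X: the values of its prefix and suffix in the
free group, together with x. Elements with any other center carry no such data. -/
def centerData (a : FD (Letter X)) : Option (FreeGroup X × X × FreeGroup X) :=
  match a.cen with
  | Letter.pos x => some (groupVal a.pre, x, groupVal a.suf)
  | _ => none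

theorem centerData_vd (a b : FD (Letter X)) :
    centerData (a.vd b) = (centerData b).map fun t => (groupVal a.word * t.1, t.2) := by
  obtain ⟨p, c, s⟩ := a
  obtain ⟨p', c' | c' | _, s'⟩ := b <;> simp [centerData, FD.vd, FD.word, mul_assoc]

theorem centerData_dv (a b : FD (Letter X)) :
    centerData (a.dv b) = (centerData a).map fun t => (t.1, t.2.1, t.2.2 * groupVal b.word) := by
  obtain ⟨p, c, s⟩ := b
  obtain ⟨p', c' | c' | _, s'⟩ := a <;> simp [centerData, FD.dv, FD.word]

theorem groupVal_word_vd (a b : FD (Letter X)) :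
    groupVal (a.vd b).word = groupVal a.word * groupVal b.word := by
  simp [FD.vd, FD.word, mul_assoc]

theorem groupVal_word_dv (a b : FD (Letter X)) :
    groupVal (a.dv b).word = groupVal a.word * groupVal b.word := by
  simp [FD.dv, FD.word, mul_assoc]

theorem DCongr.invariants_eq {a b : FD (Letter X)} (h : DCongr (rel X) a b) :
    groupVal a.word = groupVal b.word ∧ centerData a = centerData b := by
  induction h with
  | of h =>
    rcases h with ⟨x, rfl, rfl⟩ | ⟨x, rfl, rfl⟩ | ⟨y, rfl, rfl⟩ | ⟨y, rfl, rfl⟩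
    · simp [FD.word, centerData, letterVal]
    · simp [FD.word, centerData, letterVal]
    · cases y <;> simp [FD.word, centerData, letterVal]
    · cases y <;> simp [FD.word, centerData, letterVal]
  | refl => exact ⟨rfl, rfl⟩
  | symm _ ih => exact ⟨ih.1.symm, ih.2.symm⟩
  | trans _ _ ih ih' => exact ⟨ih.1.trans ih'.1, ih.2.trans ih'.2⟩
  | vd _ _ ih ih' =>
    exact ⟨by rw [groupVal_word_vd, groupVal_word_vd, ih.1, ih'.1],
      by rw [centerData_vd, centerData_vd, ih.1, ih'.2]⟩
  | dv _ _ ih ih' =>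
    exact ⟨by rw [groupVal_word_dv, groupVal_word_dv, ih.1, ih'.1],
      by rw [centerData_dv, centerData_dv, ih.2, ih'.1]⟩

theorem dcongr_e_word_of_centerData_eq_none {a : FD (Letter X)} (h : centerData a = none) :
    DCongr (rel X) a ⟨[], Letter.e, a.word⟩ := by
  obtain ⟨p, x | x | _, s⟩ := a
  · simp [centerData] at h
  · exact (dcongr_neg_suf p s x).trans (dcongr_e_center p _)
  · exact (dcongr_e_center p s).trans ((sideEquiv_e p s).2 [] _).symm

theorem dcongr_of_centerData_eq_none {a b : FD (Letter X)} (ha : centerData a = none)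
    (hb : centerData b = none) (h : groupVal a.word = groupVal b.word) : DCongr (rel X) a b :=
  ((dcongr_e_word_of_centerData_eq_none ha).trans ((sideEquiv_of_groupVal_eq h).2 [] _)).trans
    (dcongr_e_word_of_centerData_eq_none hb).symm

theorem cls_eq_cls_iff {a b : FD (Letter X)} : cls a = cls b ↔ DCongr (rel X) a b := by
  have heqv : Equivalence (DCongr (rel X)) := ⟨DCongr.refl, DCongr.symm, DCongr.trans⟩
  exact ⟨fun h => heqv.eqvGen_iff.1 (Quot.eqvGen_exact h), fun h => Quot.sound h⟩

theorem reduced_iff_isReduced {L : List (X × Bool)} : Reduced L ↔ FreeGroup.IsReduced L := by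
  have hrel : (fun a b : X × Bool => ¬(a.1 = b.1 ∧ a.2 = !b.2)) =
      fun a b => a.1 = b.1 → a.2 = b.2 := by
    funext ⟨x, i⟩ ⟨y, j⟩
    cases i <;> cases j <;> simp
  unfold Reduced
  rw [hrel]
  rfl

theorem exists_reduced_mk_eq (g : FreeGroup X) :
    ∃ L : List (X × Bool), Reduced L ∧ FreeGroup.mk L = g := by
  classical
  exact ⟨g.toWord, reduced_iff_isReduced.2 FreeGroup.isReduced_toWord, FreeGroup.mk_toWord⟩

theorem Reduced.eq_of_mk_eq {L M : List (X × Bool)} (hL : Reduced L) (hM : Reduced M)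
    (h : FreeGroup.mk L = FreeGroup.mk M) : L = M := by
  classical
  rw [← (reduced_iff_isReduced.1 hL).reduce_eq, ← (reduced_iff_isReduced.1 hM).reduce_eq]
  exact FreeGroup.reduce.sound h

theorem reduced_map_true (u : List X) : Reduced (u.map fun y => (y, true)) := by
  rw [reduced_iff_isReduced, FreeGroup.IsReduced, List.isChain_map]
  induction u with
  | nil => simp
  | cons a u ih => cases u <;> simp_all

/-- A word over X^{±1} is positive, or splits at its first negative letter. -/
theorem eq_map_true_or_exists_first_neg (L : List (X × Bool)) :
    (∃ u : List X, L = u.map fun y => (y, true)) ∨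
      ∃ (u : List X) (x : X) (v : List (X × Bool)),
        L = (u.map fun y => (y, true)) ++ (x, false) :: v := by
  induction L with
  | nil => exact Or.inl ⟨[], rfl⟩
  | cons a L ih =>
    obtain ⟨x, _ | _⟩ := a
    · exact Or.inr ⟨[], x, L, rfl⟩
    · rcases ih with ⟨u, rfl⟩ | ⟨u, y, v, rfl⟩
      · exact Or.inl ⟨x :: u, rfl⟩
      · exact Or.inr ⟨x :: u, y, v, rfl⟩

theorem map_true_injective :
    Function.Injective fun u : List X => u.map fun y => (y, true) :=
  List.map_injective_iff.2 fun _ _ h => congrArg Prod.fst h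

theorem map_true_ne_append_neg (u u' : List X) (x : X) (v : List (X × Bool)) :
    (u.map fun y => (y, true)) ≠ (u'.map fun y => (y, true)) ++ (x, false) :: v := by
  intro h
  have hmem : (x, false) ∈ u.map fun y => (y, true) := by simp [h]
  simp at hmem

theorem first_neg_unique {u u' : List X} {x x' : X} {v v' : List (X × Bool)}
    (h : (u.map fun y => (y, true)) ++ (x, false) :: v =
      (u'.map fun y => (y, true)) ++ (x', false) :: v') : u = u' ∧ x = x' ∧ v = v' := by
  induction u generalizing u' with
  | nil => cases u' <;> simp_all
  | cons a u ih =>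
    cases u' with
    | nil => simp at h
    | cons b u' =>
      simp only [List.map_cons, List.cons_append, List.cons.injEq, Prod.mk.injEq, and_true] at h
      obtain ⟨rfl, rfl, rfl⟩ := ih h.2
      exact ⟨by rw [h.1], rfl, rfl⟩

theorem exists_normal_form (a : FD (Letter X)) :
    ∃ b ∈ OmegaE X ∪ OmegaX X ∪ OmegaInv X, DCongr (rel X) b a := by
  by_cases ha : centerData a = none
  · obtain ⟨L, hL, hLa⟩ := exists_reduced_mk_eq (groupVal a.word)
    rcases eq_map_true_or_exists_first_neg L with ⟨u, rfl⟩ | ⟨u, x, v, rfl⟩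
    · refine ⟨⟨[], Letter.e, u.map Letter.pos⟩, Or.inl (Or.inl ⟨u, rfl⟩),
        dcongr_of_centerData_eq_none rfl ha ?_⟩
      rw [← hLa]
      simp [groupVal, FD.word]
    · refine ⟨⟨u.map Letter.pos, Letter.neg x, v.map pm⟩, Or.inr ⟨x, u, v, hL, rfl⟩,
        dcongr_of_centerData_eq_none rfl ha ?_⟩
      rw [← hLa]
      simp [groupVal, FD.word]
  · obtain ⟨p, x | x | _, s⟩ := a
    · obtain ⟨u, hu, hup⟩ := exists_reduced_mk_eq (groupVal p)
      obtain ⟨v, hv, hvs⟩ := exists_reduced_mk_eq (groupVal s)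
      refine ⟨⟨u.map pm, Letter.pos x, v.map pm⟩, Or.inl (Or.inr ⟨x, u, v, hu, hv, rfl⟩), ?_⟩
      have hu' : groupVal (u.map pm) = groupVal p := by rw [← hup, groupVal, strip_map_pm]
      have hv' : groupVal (v.map pm) = groupVal s := by rw [← hvs, groupVal, strip_map_pm]
      exact ((sideEquiv_of_groupVal_eq hu').1 _ _).trans ((sideEquiv_of_groupVal_eq hv').2 _ _)
    · exact absurd rfl ha
    · exact absurd rfl ha

theorem eq_of_dcongr_of_mem_normal_forms {a b : FD (Letter X)}
    (ha : a ∈ OmegaE X ∪ OmegaX X ∪ OmegaInv X) (hb : b ∈ OmegaE X ∪ OmegaX X ∪ OmegaInv X)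
    (h : DCongr (rel X) a b) : a = b := by
  obtain ⟨hword, hcen⟩ := h.invariants_eq
  rcases ha with (⟨u, rfl⟩ | ⟨x, u, v, hu, hv, rfl⟩) | ⟨x, u, v, hr, rfl⟩ <;>
    rcases hb with (⟨u', rfl⟩ | ⟨x', u', v', hu', hv', rfl⟩) | ⟨x', u', v', hr', rfl⟩ <;>
    simp only [centerData, reduceCtorEq, Option.some.injEq, Prod.mk.injEq] at hcen <;>
    simp only [groupVal, FD.word, strip_append, strip_cons_e, strip_cons_neg, strip_map_pos,
      strip_map_pm, List.nil_append] at hword hcen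
  · have := (reduced_map_true u).eq_of_mk_eq (reduced_map_true u') hword
    rw [map_true_injective this]
  · exact absurd ((reduced_map_true u).eq_of_mk_eq hr' hword) (map_true_ne_append_neg _ _ _ _)
  · rw [hu.eq_of_mk_eq hu' hcen.1, hv.eq_of_mk_eq hv' hcen.2.2, hcen.2.1]
  · exact absurd ((reduced_map_true u').eq_of_mk_eq hr hword.symm) (map_true_ne_append_neg _ _ _ _)
  · obtain ⟨rfl, rfl, rfl⟩ := first_neg_unique (hr.eq_of_mk_eq hr' hword)
    rfl

end Presentation

/-- Every element of Disgp⟨X^{±1} ∪ {e} | S⟩ is the class of exactly one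
element of Ω_e ∪ Ω_X ∪ Ω_{X⁻¹}: the quotient map restricts to a bijection
from Ω_e ∪ Ω_X ∪ Ω_{X⁻¹} onto the quotient. -/
theorem normal_forms_unique (X : Type*) (c : DQ X) :
    ∃! a : FD (Letter X), a ∈ OmegaE X ∪ OmegaX X ∪ OmegaInv X ∧ cls a = c := by
  obtain ⟨a, rfl⟩ := Quot.exists_rep c
  obtain ⟨b, hb, hba⟩ := exists_normal_form a
  refine ⟨b, ⟨hb, cls_eq_cls_iff.2 hba⟩, fun b' ⟨hb', hb'a⟩ => ?_⟩
  exact eq_of_dcongr_of_mem_normal_forms hb' hb ((cls_eq_cls_iff.1 hb'a).trans hba.symm)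
end

section
/- In Disgp⟨X^{±1} ∪ {e} | S⟩, for every normal form [q]_n ∈ Ω_e ∪ Ω_X ∪ Ω_{X⁻¹} and every [uxv]_{|u|+1} ∈ Ω_X: (class of [q]_n) ⊢ (class of [uxv]_{|u|+1}) = class of [(q̂u) x v]_{|q̂u|+1}, where q̂u denotes the reduced word obtained from the concatenation of q̂ and u; and (class of [uxv]_{|u|+1}) ⊣ (class of [q]_n) = class of [u x (v̂q)]_{|u|+1}, where v̂q denotes the reduced word obtained from the concatenation of v and q̂. In particular both products again lie in the image of Ω_X. -/
namespace DCongr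

variable {Y : Type*} {r : FD Y → FD Y → Prop}

/-- Congruent elements stay congruent when a word is put in front of both. -/
theorem append_pre_s12 {a b : FD Y} (h : DCongr r a b) (p : List Y) :
    DCongr r ⟨p ++ a.pre, a.cen, a.suf⟩ ⟨p ++ b.pre, b.cen, b.suf⟩ := by
  cases p with
  | nil => exact h
  | cons y p => exact DCongr.vd (DCongr.refl ⟨[], y, p⟩) h

/-- Congruent elements stay congruent when a word is put behind both. -/
theorem suf_append {a b : FD Y} (h : DCongr r a b) (s : List Y) :
    DCongr r ⟨a.pre, a.cen, a.suf ++ s⟩ ⟨b.pre, b.cen, b.suf ++ s⟩ := by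
  cases s with
  | nil => simpa using h
  | cons y s => simpa [FD.dv] using DCongr.dv h (DCongr.refl ⟨[], y, s⟩)

/-- To the left of the center, only the underlying word of a relation matters. -/
theorem word_pre {a b : FD Y} (h : DCongr r a b) (p p' : List Y) (c : Y) (s : List Y) :
    DCongr r ⟨p ++ (a.word ++ p'), c, s⟩ ⟨p ++ (b.word ++ p'), c, s⟩ := by
  simpa [FD.vd, FD.word] using (DCongr.vd h (DCongr.refl ⟨p', c, s⟩)).append_pre_s12 p

/-- To the right of the center, only the underlying word of a relation matters. -/
theorem word_suf {a b : FD Y} (h : DCongr r a b) (p : List Y) (c : Y) (s s' : List Y) :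
    DCongr r ⟨p, c, s ++ (a.word ++ s')⟩ ⟨p, c, s ++ (b.word ++ s')⟩ := by
  simpa [FD.dv, FD.word] using (DCongr.dv (DCongr.refl ⟨p, c, s⟩) h).suf_append s'

end DCongr

section FreeDigroup

variable {X : Type*}

theorem rel_pos_neg (x : X) : rel X ⟨[Letter.pos x], Letter.neg x, []⟩ ⟨[], Letter.e, []⟩ :=
  Or.inl ⟨x, rfl, rfl⟩

theorem rel_neg_pos (x : X) : rel X ⟨[], Letter.neg x, [Letter.pos x]⟩ ⟨[], Letter.e, []⟩ :=
  Or.inr (Or.inl ⟨x, rfl, rfl⟩)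

theorem rel_right_unit (y : Letter X) : rel X ⟨[], y, [Letter.e]⟩ ⟨[], y, []⟩ :=
  Or.inr (Or.inr (Or.inl ⟨y, rfl, rfl⟩))

theorem rel_left_unit (y : Letter X) : rel X ⟨[Letter.e], y, []⟩ ⟨[], y, []⟩ :=
  Or.inr (Or.inr (Or.inr ⟨y, rfl, rfl⟩))

/-- An `e` to the left of the center can be deleted. -/
theorem dcongr_pre_e (p p' : List (Letter X)) (c : Letter X) (s : List (Letter X)) :
    DCongr (rel X) ⟨p ++ Letter.e :: p', c, s⟩ ⟨p ++ p', c, s⟩ := by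
  cases p' with
  | nil => simpa using ((DCongr.of (rel_left_unit c)).append_pre_s12 p).suf_append s
  | cons y p' => simpa [FD.word] using (DCongr.of (rel_left_unit y)).word_pre p p' c s

/-- An `e` to the right of the center can be deleted. -/
theorem dcongr_suf_e (p : List (Letter X)) (c : Letter X) (s s' : List (Letter X)) :
    DCongr (rel X) ⟨p, c, s ++ Letter.e :: s'⟩ ⟨p, c, s ++ s'⟩ := by
  cases s' with
  | cons y s' => simpa [FD.word] using (DCongr.of (rel_left_unit y)).word_suf p c s s'
  | nil =>
    rcases List.eq_nil_or_concat s with rfl | ⟨t, y, rfl⟩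
    · simpa using (DCongr.of (rel_right_unit c)).append_pre_s12 p
    · simpa [FD.word] using (DCongr.of (rel_right_unit y)).word_suf p c t []

/-- Two mutually inverse adjacent letters form the word of an element congruent to `[e]₁`. -/
theorem exists_dcongr_e (x : X) (b : Bool) :
    ∃ a : FD (Letter X), a.word = [pm (x, b), pm (x, !b)] ∧
      DCongr (rel X) a ⟨[], Letter.e, []⟩ := by
  cases b
  · exact ⟨_, rfl, DCongr.of (rel_neg_pos x)⟩
  · exact ⟨_, rfl, DCongr.of (rel_pos_neg x)⟩

theorem dcongr_pre_step {L M : List (X × Bool)} (h : FreeGroup.Red.Step L M)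
    (c : Letter X) (s : List (Letter X)) :
    DCongr (rel X) ⟨L.map pm, c, s⟩ ⟨M.map pm, c, s⟩ := by
  obtain @⟨L₁, L₂, x, b⟩ := h
  obtain ⟨a, ha, hae⟩ := exists_dcongr_e x b
  have h := hae.word_pre (L₁.map pm) (L₂.map pm) c s
  rw [ha] at h
  simpa using h.trans (dcongr_pre_e _ _ c s)

theorem dcongr_suf_step {L M : List (X × Bool)} (h : FreeGroup.Red.Step L M)
    (p : List (Letter X)) (c : Letter X) :
    DCongr (rel X) ⟨p, c, L.map pm⟩ ⟨p, c, M.map pm⟩ := by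
  obtain @⟨L₁, L₂, x, b⟩ := h
  obtain ⟨a, ha, hae⟩ := exists_dcongr_e x b
  have h := hae.word_suf p c (L₁.map pm) (L₂.map pm)
  rw [ha] at h
  simpa using h.trans (dcongr_suf_e p c _ _)

theorem dcongr_pre_red {L M : List (X × Bool)} (h : FreeGroup.Red L M)
    (c : Letter X) (s : List (Letter X)) :
    DCongr (rel X) ⟨L.map pm, c, s⟩ ⟨M.map pm, c, s⟩ := by
  induction h with
  | refl => exact DCongr.refl _
  | tail _ hstep ih => exact ih.trans (dcongr_pre_step hstep c s)

theorem dcongr_suf_red {L M : List (X × Bool)} (h : FreeGroup.Red L M)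
    (p : List (Letter X)) (c : Letter X) :
    DCongr (rel X) ⟨p, c, L.map pm⟩ ⟨p, c, M.map pm⟩ := by
  induction h with
  | refl => exact DCongr.refl _
  | tail _ hstep ih => exact ih.trans (dcongr_suf_step hstep p c)

theorem dcongr_pre_strip (w p : List (Letter X)) (c : Letter X) (s : List (Letter X)) :
    DCongr (rel X) ⟨p ++ w, c, s⟩ ⟨p ++ (strip w).map pm, c, s⟩ := by
  induction w generalizing p with
  | nil => exact DCongr.refl _
  | cons y w ih =>
    cases y with
    | pos x => simpa [strip, pm] using ih (p ++ [Letter.pos x])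
    | neg x => simpa [strip, pm] using ih (p ++ [Letter.neg x])
    | e => simpa [strip] using (dcongr_pre_e p w c s).trans (ih p)

theorem dcongr_suf_strip (w p : List (Letter X)) (c : Letter X) (s : List (Letter X)) :
    DCongr (rel X) ⟨p, c, s ++ w⟩ ⟨p, c, s ++ (strip w).map pm⟩ := by
  induction w generalizing s with
  | nil => exact DCongr.refl _
  | cons y w ih =>
    cases y with
    | pos x => simpa [strip, pm] using ih (s ++ [Letter.pos x])
    | neg x => simpa [strip, pm] using ih (s ++ [Letter.neg x])
    | e => simpa [strip] using (dcongr_suf_e p c s w).trans (ih s)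

/-- A word with its `e`s deleted freely reduces to its reduced form. -/
theorem red_strip_hat (w : List (Letter X)) : FreeGroup.Red (strip w) (hat w) :=
  letI := Classical.decEq X
  FreeGroup.reduce.red

/-- The word to the left of the center may be replaced by its reduced form. -/
theorem cls_pre_hat (w : List (Letter X)) (c : Letter X) (s : List (Letter X)) :
    cls ⟨w, c, s⟩ = cls ⟨(hat w).map pm, c, s⟩ :=
  Quot.sound ((dcongr_pre_strip w [] c s).trans (dcongr_pre_red (red_strip_hat w) c s))

/-- The word to the right of the center may be replaced by its reduced form. -/
theorem cls_suf_hat (p : List (Letter X)) (c : Letter X) (w : List (Letter X)) :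
    cls ⟨p, c, w⟩ = cls ⟨p, c, (hat w).map pm⟩ :=
  Quot.sound ((dcongr_suf_strip w p c []).trans (dcongr_suf_red (red_strip_hat w) p c))

theorem reduced_hat (w : List (Letter X)) : Reduced (hat w) := by
  let := Classical.decEq X
  have h : FreeGroup.IsReduced (hat w) :=
    FreeGroup.isReduced_iff_reduce_eq.mpr FreeGroup.reduce.idem
  exact List.IsChain.imp (fun a b hab => by simpa using hab) h

theorem cls_vd_cls (a b : FD (Letter X)) : (cls a).vd (cls b) = cls (a.vd b) := rfl

theorem cls_dv_cls (a b : FD (Letter X)) : (cls a).dv (cls b) = cls (a.dv b) := rfl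

end FreeDigroup

/-- Multiplication by an element of Ω_X: for any normal form [q]_n and any
[uxv]_{|u|+1} ∈ Ω_X, [q]_n ⊢ [uxv]_{|u|+1} = [(q̂u)xv]_{|q̂u|+1} and
[uxv]_{|u|+1} ⊣ [q]_n = [ux(v̂q)]_{|u|+1}; in particular both products again
lie in the image of Ω_X. -/
theorem mul_with_OmegaX (X : Type*) (q : FD (Letter X))
    (hq : q ∈ OmegaE X ∪ OmegaX X ∪ OmegaInv X)
    (x : X) (u v : List (X × Bool)) (hu : Reduced u) (hv : Reduced v) :
    DQ.vd (cls q) (cls ⟨u.map pm, Letter.pos x, v.map pm⟩) =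
      cls ⟨(hat (q.word ++ u.map pm)).map pm, Letter.pos x, v.map pm⟩ ∧
    DQ.dv (cls ⟨u.map pm, Letter.pos x, v.map pm⟩) (cls q) =
      cls ⟨u.map pm, Letter.pos x, (hat (v.map pm ++ q.word)).map pm⟩ ∧
    (⟨(hat (q.word ++ u.map pm)).map pm, Letter.pos x, v.map pm⟩ : FD (Letter X)) ∈
      OmegaX X ∧
    (⟨u.map pm, Letter.pos x, (hat (v.map pm ++ q.word)).map pm⟩ : FD (Letter X)) ∈
      OmegaX X := by
  refine ⟨?_, ?_, ⟨x, _, v, reduced_hat _, hv, rfl⟩, ⟨x, u, _, hu, reduced_hat _, rfl⟩⟩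
  · rw [← cls_pre_hat]
    simp [cls_vd_cls, FD.vd, FD.word]
  · rw [← cls_suf_hat]
    simp [cls_dv_cls, FD.dv, FD.word]
end

section
/- In Disgp⟨X^{±1} ∪ {e} | S⟩, for every normal form [q]_n ∈ Ω_e ∪ Ω_X ∪ Ω_{X⁻¹} and every [p]_m ∈ Ω_e ∪ Ω_{X⁻¹}: (class of [q]_n) ⊢ (class of [p]_m) equals the class of [e(q̂p)]_1 if the reduced word q̂p lies in X*, and equals the class of [q̂p]_{λ(q̂p)} otherwise; similarly, (class of [p]_m) ⊣ (class of [q]_n) equals the class of [e(p̂q)]_1 if p̂q ∈ X*, and equals the class of [p̂q]_{λ(p̂q)} otherwise. -/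
namespace DCongr

theorem prepend {Y : Type*} {r : FD Y → FD Y → Prop} (P : List Y) {a b : FD Y}
    (h : DCongr r a b) :
    DCongr r ⟨P ++ a.pre, a.cen, a.suf⟩ ⟨P ++ b.pre, b.cen, b.suf⟩ := by
  cases P with
  | nil => exact h
  | cons y P => exact .vd (.refl ⟨[], y, P⟩) h

theorem append {Y : Type*} {r : FD Y → FD Y → Prop} (s : List Y) {a b : FD Y}
    (h : DCongr r a b) :
    DCongr r ⟨a.pre, a.cen, a.suf ++ s⟩ ⟨b.pre, b.cen, b.suf ++ s⟩ := by
  cases s with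
  | nil => simpa using h
  | cons y s => simpa [FD.dv] using DCongr.dv h (.refl ⟨[], y, s⟩)

variable {X : Type*}

theorem pos_vd_neg_s13 (x : X) :
    DCongr (rel X) ⟨[Letter.pos x], Letter.neg x, []⟩ ⟨[], Letter.e, []⟩ :=
  .of (Or.inl ⟨x, rfl, rfl⟩)

theorem neg_dv_pos_s13 (x : X) :
    DCongr (rel X) ⟨[], Letter.neg x, [Letter.pos x]⟩ ⟨[], Letter.e, []⟩ :=
  .of (Or.inr (Or.inl ⟨x, rfl, rfl⟩))

theorem dv_e_s13 (y : Letter X) : DCongr (rel X) ⟨[], y, [Letter.e]⟩ ⟨[], y, []⟩ :=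
  .of (Or.inr (Or.inr (Or.inl ⟨y, rfl, rfl⟩)))

theorem e_vd_s13 (y : Letter X) : DCongr (rel X) ⟨[Letter.e], y, []⟩ ⟨[], y, []⟩ :=
  .of (Or.inr (Or.inr (Or.inr ⟨y, rfl, rfl⟩)))

/-- Occurrences of `e` to the right of the center can be deleted. -/
theorem suffix_delete_e (c : Letter X) (A B : List (Letter X)) :
    DCongr (rel X) ⟨[], c, A ++ Letter.e :: B⟩ ⟨[], c, A ++ B⟩ := by
  suffices h : DCongr (rel X) ⟨[], c, A ++ [Letter.e]⟩ ⟨[], c, A⟩ by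
    simpa using append B h
  rcases List.eq_nil_or_concat A with rfl | ⟨A, y, rfl⟩
  · exact dv_e_s13 c
  · simpa [FD.dv] using DCongr.dv (.refl ⟨[], c, A⟩) (dv_e_s13 y)

/-- Mutually inverse neighbours to the right of the center can be cancelled. -/
theorem suffix_cancel (c : Letter X) (x : X) (b : Bool) (A B : List (Letter X)) :
    DCongr (rel X) ⟨[], c, A ++ pm (x, b) :: pm (x, !b) :: B⟩ ⟨[], c, A ++ B⟩ := by
  refine .trans ?_ (suffix_delete_e c A B)
  cases b
  · simpa [FD.dv, pm] using append B (.dv (.refl ⟨[], c, A⟩) (neg_dv_pos_s13 x))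
  · simpa [FD.dv, pm] using append B (.dv (.refl ⟨[], c, A⟩) (pos_vd_neg_s13 x))

theorem neg_e_dv (x : X) :
    DCongr (rel X) ⟨[], Letter.neg x, []⟩ ⟨[], Letter.e, [Letter.neg x]⟩ :=
  .trans (.symm (suffix_cancel (Letter.neg x) x true [] [])) (append [Letter.neg x] (neg_dv_pos_s13 x))

theorem neg_vd_e_s13 (x : X) :
    DCongr (rel X) ⟨[Letter.neg x], Letter.e, []⟩ ⟨[], Letter.neg x, []⟩ :=
  .trans (prepend [Letter.neg x] (.symm (pos_vd_neg_s13 x)))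
    (.trans (.vd (neg_dv_pos_s13 x) (.refl ⟨[], Letter.neg x, []⟩)) (e_vd_s13 _))

theorem vd_e_comm (y : Letter X) :
    DCongr (rel X) ⟨[y], Letter.e, []⟩ ⟨[], Letter.e, [y]⟩ := by
  cases y with
  | pos x =>
    exact .trans (prepend [Letter.pos x] (.symm (neg_dv_pos_s13 x)))
      (append [Letter.pos x] (pos_vd_neg_s13 x))
  | neg x => exact .trans (neg_vd_e_s13 x) (neg_e_dv x)
  | e => exact .trans (e_vd_s13 _) (.symm (dv_e_s13 _))

theorem vd_e_comm_word (P s : List (Letter X)) :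
    DCongr (rel X) ⟨P, Letter.e, s⟩ ⟨[], Letter.e, P ++ s⟩ := by
  induction P using List.reverseRecOn generalizing s with
  | nil => exact .refl _
  | append_singleton P y ih =>
    refine .trans (?_ : DCongr _ _ ⟨P, Letter.e, y :: s⟩) (by simpa using ih (y :: s))
    simpa using prepend P (append s (vd_e_comm y))

/-- An element whose center is not in `X` depends only on its underlying word. -/
theorem e_dv_word (a : FD (Letter X)) (ha : ∀ x, a.cen ≠ Letter.pos x) :
    DCongr (rel X) a ⟨[], Letter.e, a.word⟩ := by
  obtain ⟨P, c, s⟩ := a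
  cases c with
  | pos x => exact absurd rfl (ha x)
  | neg x =>
    exact .trans (by simpa using prepend P (append s (neg_e_dv x)))
      (vd_e_comm_word P (Letter.neg x :: s))
  | e => exact .trans (vd_e_comm_word P s) (.symm (suffix_delete_e _ P s))

theorem suffix_strip (c : Letter X) (A w : List (Letter X)) :
    DCongr (rel X) ⟨[], c, A ++ w⟩ ⟨[], c, A ++ (strip w).map pm⟩ := by
  induction w generalizing A with
  | nil => exact .refl _
  | cons y w ih =>
    cases y with
    | pos x => simpa [strip, pm] using ih (A ++ [Letter.pos x])
    | neg x => simpa [strip, pm] using ih (A ++ [Letter.neg x])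
    | e => exact .trans (suffix_delete_e c A w) (by simpa [strip] using ih A)

theorem suffix_red (c : Letter X) {L M : List (X × Bool)} (h : FreeGroup.Red L M) :
    DCongr (rel X) ⟨[], c, L.map pm⟩ ⟨[], c, M.map pm⟩ := by
  induction h with
  | refl => exact .refl _
  | tail _ hs ih =>
    refine .trans ih ?_
    cases hs
    simpa using suffix_cancel c _ _ _ _

theorem e_dv_hat (a : FD (Letter X)) (ha : ∀ x, a.cen ≠ Letter.pos x) :
    DCongr (rel X) a ⟨[], Letter.e, (hat a.word).map pm⟩ :=
  letI := Classical.decEq X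
  .trans (e_dv_word a ha) (.trans (suffix_strip _ [] _) (suffix_red _ FreeGroup.reduce.red))

end DCongr

theorem toNF_lam {X : Type*} {L : List (X × Bool)} (h : ¬ L.all (fun a => a.2)) :
    (∀ x, (toNF L (lam L)).cen ≠ Letter.pos x) ∧ (toNF L (lam L)).word = L.map pm := by
  have hlt : L.findIdx (fun p => !p.2) < L.length := by
    rw [List.findIdx_lt_length]
    simpa using h
  have hneg := List.findIdx_getElem (w := hlt)
  constructor
  · intro x
    simp only [toNF, lam, Nat.add_sub_cancel, List.getElem?_eq_getElem hlt, Option.map_some,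
      Option.getD_some, pm]
    simp_all
  · simp only [toNF, lam, FD.word, Nat.add_sub_cancel, List.getElem?_eq_getElem hlt,
      Option.map_some, Option.getD_some]
    rw [← List.map_cons, ← List.map_append, List.cons_getElem_drop_succ, List.take_append_drop]

/-- An element whose center is not in `X` is congruent to its normal form. -/
theorem cls_eq_normal_form {X : Type*} (a : FD (Letter X)) (ha : ∀ x, a.cen ≠ Letter.pos x) :
    cls a = if (hat a.word).all (fun a => a.2) then
        cls ⟨[], Letter.e, (hat a.word).map pm⟩
      else cls (toNF (hat a.word) (lam (hat a.word))) := by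
  split_ifs with h
  · exact Quot.sound (.e_dv_hat a ha)
  · obtain ⟨hc, hw⟩ := toNF_lam h
    have hNF := DCongr.e_dv_word _ hc
    rw [hw] at hNF
    exact Quot.sound (.trans (.e_dv_hat a ha) (.symm hNF))

/-- Multiplication with an element of Ω_e ∪ Ω_{X⁻¹}: for any normal forms
[q]_n ∈ Ω_e ∪ Ω_X ∪ Ω_{X⁻¹} and [p]_m ∈ Ω_e ∪ Ω_{X⁻¹},
[q]_n ⊢ [p]_m = [e(q̂p)]₁ if q̂p ∈ X* and [q̂p]_{λ(q̂p)} otherwise, and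
[p]_m ⊣ [q]_n = [e(p̂q)]₁ if p̂q ∈ X* and [p̂q]_{λ(p̂q)} otherwise. -/
theorem mul_with_group_part (X : Type*) (q p : FD (Letter X))
    (hq : q ∈ OmegaE X ∪ OmegaX X ∪ OmegaInv X)
    (hp : p ∈ OmegaE X ∪ OmegaInv X) :
    (DQ.vd (cls q) (cls p) =
      if (hat (q.word ++ p.word)).all (fun a => a.2) then
        cls ⟨[], Letter.e, (hat (q.word ++ p.word)).map pm⟩
      else
        cls (toNF (hat (q.word ++ p.word)) (lam (hat (q.word ++ p.word))))) ∧
    (DQ.dv (cls p) (cls q) =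
      if (hat (p.word ++ q.word)).all (fun a => a.2) then
        cls ⟨[], Letter.e, (hat (p.word ++ q.word)).map pm⟩
      else
        cls (toNF (hat (p.word ++ q.word)) (lam (hat (p.word ++ q.word))))) := by
  have hc : ∀ x, p.cen ≠ Letter.pos x := by
    rcases hp with ⟨u, rfl⟩ | ⟨y, u, v, -, rfl⟩ <;> simp
  have hvd : (q.vd p).word = q.word ++ p.word := by simp [FD.vd, FD.word]
  have hdv : (p.dv q).word = p.word ++ q.word := by simp [FD.dv, FD.word]
  rw [← hvd, ← hdv]
  exact ⟨cls_eq_normal_form (q.vd p) hc, cls_eq_normal_form (p.dv q) hc⟩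
end
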